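/- Let n be a positive integer, η ∈ [0, 1/2], and let f, g : {0,1}^n → ℝ be nonnegative functions. Let u be uniformly distributed on {0,1}^n and let z ∈ {0,1}^n be η-biased (each bit independently 1 with probability η), independent of u. Then E_{u,z}[f(u)·g(u⊕z)] ≤ (E_u[f(u)^{2−2η}])^{1/(2−2η)} · (E_u[g(u)^{2−2η}])^{1/(2−2η)}, where ⊕ is bitwise XOR. -/

import Mathlib

open scoped Classical
open Finset

/-- Bitwise XOR of two strings in `{0,1}^n`. -/
def sxor {n : ℕ} (w w' : Fin n → Bool) : Fin n → Bool := fun j => xor (w j) (w' j)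

/-- Hamming weight of a string in `{0,1}^n`. -/
def wt {n : ℕ} (z : Fin n → Bool) : ℕ := (Finset.univ.filter fun j => z j = true).card

/-!
Hypercontractivity tensorizes: a bilinear form with a nonnegative product kernel is bounded by
applying the bound of one factor in the inner variables and that of the other to the resulting
partial norms. As the noise kernel on `{0,1}^n` is the `n`-th power of the kernel on one bit, only
two points matter. There, with `x` the mean and `y` the half-difference of the two values of `f`,
the form is `x x' + (1 - 2η) y y'`, and Cauchy–Schwarz reduces its bound to Bonami's inequality
`x² + (p - 1) y² ≤ ‖f‖_p²`.
-/

open scoped BigOperators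

section TwoPoint

lemma two_le_rpow_one_add_add_rpow_one_sub {r y : ℝ} (hr : r ≤ 0) (hy : |y| < 1) :
    2 ≤ (1 + y) ^ r + (1 - y) ^ r := by
  obtain ⟨hy_lower, hy_upper⟩ := abs_lt.mp hy
  have hadd : 0 < 1 + y := by linarith
  have hsub : 0 < 1 - y := by linarith
  have hprod : 1 ≤ (1 + y) ^ r * (1 - y) ^ r := by
    rw [← Real.mul_rpow hadd.le hsub.le]
    exact Real.one_le_rpow_of_pos_of_le_one_of_nonpos (mul_pos hadd hsub)
      (by nlinarith [sq_nonneg y]) hr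
  nlinarith [sq_nonneg ((1 + y) ^ r - (1 - y) ^ r), Real.rpow_pos_of_pos hadd r,
    Real.rpow_pos_of_pos hsub r]

lemma convexOn_rpow_one_add_add_rpow_one_sub_sub_sq {p : ℝ} (hp₁ : 1 ≤ p) (hp₂ : p ≤ 2) :
    ConvexOn ℝ (Set.Icc (-1) 1)
      fun y : ℝ ↦ (1 + y) ^ p + (1 - y) ^ p - p * (p - 1) * y ^ 2 := by
  have hadd (s : ℝ) {x : ℝ} (hx : x ∈ Set.Ioo (-1 : ℝ) 1) :
      HasDerivAt (fun y : ℝ ↦ (1 + y) ^ s) (s * (1 + x) ^ (s - 1)) x := by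
    simpa using ((hasDerivAt_id x).const_add 1).rpow_const (p := s) (.inl (by grind))
  have hsub (s : ℝ) {x : ℝ} (hx : x ∈ Set.Ioo (-1 : ℝ) 1) :
      HasDerivAt (fun y : ℝ ↦ (1 - y) ^ s) (-(s * (1 - x) ^ (s - 1))) x := by
    simpa using ((hasDerivAt_id x).const_sub 1).rpow_const (p := s) (.inl (by grind))
  apply convexOn_of_hasDerivWithinAt2_nonneg (convex_Icc _ _)
    (f' := fun y ↦ p * (1 + y) ^ (p - 1) + -(p * (1 - y) ^ (p - 1)) - p * (p - 1) * (2 * y))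
    (f'' := fun y ↦ p * ((p - 1) * (1 + y) ^ (p - 1 - 1)) +
      -(p * -((p - 1) * (1 - y) ^ (p - 1 - 1))) - p * (p - 1) * 2)
  · have hp₀ : 0 ≤ p := by linarith
    fun_prop (disch := assumption)
  · rw [interior_Icc]
    intro x hx
    have hsq : HasDerivAt (fun y : ℝ ↦ p * (p - 1) * y ^ 2) (p * (p - 1) * (2 * x)) x := by
      simpa using (hasDerivAt_pow 2 x).const_mul (p * (p - 1))
    exact (((hadd p hx).add (hsub p hx)).sub hsq).hasDerivWithinAt
  · rw [interior_Icc]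
    intro x hx
    have hlin : HasDerivAt (fun y : ℝ ↦ p * (p - 1) * (2 * y)) (p * (p - 1) * 2) x := by
      simpa using ((hasDerivAt_id x).const_mul 2).const_mul (p * (p - 1))
    exact ((((hadd (p - 1) hx).const_mul p).add ((hsub (p - 1) hx).const_mul p).neg).sub
      hlin).hasDerivWithinAt
  · rw [interior_Icc]
    intro x hx
    have hsum : 2 ≤ (1 + x) ^ (p - 1 - 1) + (1 - x) ^ (p - 1 - 1) :=
      two_le_rpow_one_add_add_rpow_one_sub (by linarith) (abs_lt.mpr hx)
    have hcoeff : 0 ≤ p * (p - 1) := mul_nonneg (by linarith) (by linarith)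
    have hproduct := mul_nonneg hcoeff (sub_nonneg.mpr hsum)
    linear_combination hproduct

lemma two_add_mul_sq_le_rpow_one_add_add_rpow_one_sub {p y : ℝ} (hp₁ : 1 ≤ p) (hp₂ : p ≤ 2)
    (hy : |y| ≤ 1) : 2 + p * (p - 1) * y ^ 2 ≤ (1 + y) ^ p + (1 - y) ^ p := by
  -- An even convex function is minimal at the origin.
  have hmid := (convexOn_rpow_one_add_add_rpow_one_sub_sub_sq hp₁ hp₂).2
    (abs_le.mp hy) (abs_le.mp ((abs_neg y).trans_le hy))
    one_half_pos.le one_half_pos.le (add_halves 1)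
  norm_num [← sub_eq_add_neg] at hmid
  linarith

lemma one_add_mul_sq_rpow_half_le {p y : ℝ} (hp₁ : 1 ≤ p) (hp₂ : p ≤ 2) (hy : |y| ≤ 1) :
    (1 + (p - 1) * y ^ 2) ^ (p / 2) ≤ ((1 + y) ^ p + (1 - y) ^ p) / 2 := by
  have hnonneg : 0 ≤ (p - 1) * y ^ 2 := mul_nonneg (by linarith) (sq_nonneg y)
  calc (1 + (p - 1) * y ^ 2) ^ (p / 2)
      ≤ 1 + p / 2 * ((p - 1) * y ^ 2) :=
        rpow_one_add_le_one_add_mul_self (by linarith) (by linarith) (by linarith)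
    _ = (2 + p * (p - 1) * y ^ 2) / 2 := by ring
    _ ≤ ((1 + y) ^ p + (1 - y) ^ p) / 2 :=
        div_le_div_of_nonneg_right (two_add_mul_sq_le_rpow_one_add_add_rpow_one_sub hp₁ hp₂ hy)
          zero_le_two

lemma sq_add_mul_sq_rpow_half_le {p x y : ℝ} (hp₁ : 1 ≤ p) (hp₂ : p ≤ 2) (hyx : |y| ≤ x) :
    (x ^ 2 + (p - 1) * y ^ 2) ^ (p / 2) ≤ ((x + y) ^ p + (x - y) ^ p) / 2 := by
  have hx : 0 ≤ x := (abs_nonneg y).trans hyx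
  obtain rfl | hx_pos := hx.eq_or_lt
  · obtain rfl : y = 0 := abs_nonpos_iff.mp hyx
    have hp₀ : p ≠ 0 := by linarith
    simp [hp₀]
  obtain ⟨t, rfl⟩ : ∃ t, y = x * t := ⟨y / x, by field_simp⟩
  have ht : |t| ≤ 1 := by
    rwa [abs_mul, abs_of_pos hx_pos, mul_le_iff_le_one_right hx_pos] at hyx
  obtain ⟨ht_lower, ht_upper⟩ := abs_le.mp ht
  have hnonneg : 0 ≤ (p - 1) * t ^ 2 := mul_nonneg (by linarith) (sq_nonneg t)
  calc (x ^ 2 + (p - 1) * (x * t) ^ 2) ^ (p / 2)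
      = (x ^ 2 * (1 + (p - 1) * t ^ 2)) ^ (p / 2) := by ring_nf
    _ = x ^ p * (1 + (p - 1) * t ^ 2) ^ (p / 2) := by
        rw [Real.mul_rpow (sq_nonneg x) (by linarith), ← Real.rpow_natCast_mul hx]
        congr 2
        push_cast
        ring
    _ ≤ x ^ p * (((1 + t) ^ p + (1 - t) ^ p) / 2) := by
        gcongr
        exact one_add_mul_sq_rpow_half_le hp₁ hp₂ ht
    _ = ((x * (1 + t)) ^ p + (x * (1 - t)) ^ p) / 2 := by
        rw [Real.mul_rpow hx (by linarith), Real.mul_rpow hx (by linarith)]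
        ring
    _ = ((x + x * t) ^ p + (x - x * t) ^ p) / 2 := by ring_nf

lemma mul_add_mul_mul_le_sqrt_mul_sqrt {a b ρ : ℝ} (ha : 0 ≤ a) (hb : 0 ≤ b)
    (hρ : ρ ^ 2 ≤ a * b) (x y x' y' : ℝ) :
    x * x' + ρ * (y * y') ≤ √(x ^ 2 + a * y ^ 2) * √(x' ^ 2 + b * y' ^ 2) := by
  have hcross : ρ * (y * y') ≤ (√a * |y|) * (√b * |y'|) :=
    calc ρ * (y * y') ≤ |ρ| * (|y| * |y'|) := by
          rw [← abs_mul, ← abs_mul]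
          exact le_abs_self _
      _ ≤ √(a * b) * (|y| * |y'|) := by
          gcongr
          exact Real.abs_le_sqrt hρ
      _ = (√a * |y|) * (√b * |y'|) := by
          rw [Real.sqrt_mul ha]
          ring
  have hcauchy := Real.sum_mul_le_sqrt_mul_sqrt Finset.univ ![x, √a * |y|] ![x', √b * |y'|]
  simp only [Fin.sum_univ_two, Matrix.cons_val_zero, Matrix.cons_val_one, mul_pow, sq_abs,
    Real.sq_sqrt ha, Real.sq_sqrt hb] at hcauchy
  linarith

end TwoPoint

/-- The power mean `(𝔼 a, f a ^ p) ^ (1 / p)`: the `L^p` norm of a nonnegative `f` with respect to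
the uniform probability measure. -/
noncomputable def powerMean {α : Type*} [Fintype α] (p : ℝ) (f : α → ℝ) : ℝ :=
  (𝔼 a, f a ^ p) ^ (1 / p)

section PowerMean

variable {α β : Type*} [Fintype α] [Fintype β] {p : ℝ}

lemma powerMean_nonneg {f : α → ℝ} (hf : 0 ≤ f) : 0 ≤ powerMean p f :=
  Real.rpow_nonneg (Finset.expect_nonneg fun a _ ↦ Real.rpow_nonneg (hf a) p) _

lemma powerMean_comp_equiv (e : α ≃ β) (f : β → ℝ) :
    powerMean p (fun a ↦ f (e a)) = powerMean p f := by
  rw [powerMean, powerMean, Fintype.expect_equiv e _ (fun b ↦ f b ^ p) fun _ ↦ rfl]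

lemma powerMean_of_unique [Unique α] (hp : p ≠ 0) {f : α → ℝ} (hf : 0 ≤ f) :
    powerMean p f = f default := by
  rw [powerMean, Finset.univ_unique, Finset.expect_singleton, one_div,
    Real.rpow_rpow_inv (hf default) hp]

lemma powerMean_rpow (hp : p ≠ 0) {f : α → ℝ} (hf : 0 ≤ f) :
    powerMean p f ^ p = 𝔼 a, f a ^ p := by
  rw [powerMean, one_div,
    Real.rpow_inv_rpow (Finset.expect_nonneg fun a _ ↦ Real.rpow_nonneg (hf a) p) hp]

lemma powerMean_prod (hp : p ≠ 0) {f : α × β → ℝ} (hf : 0 ≤ f) :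
    powerMean p f = powerMean p fun a ↦ powerMean p fun b ↦ f (a, b) := by
  have hinner (a : α) : powerMean p (fun b ↦ f (a, b)) ^ p = 𝔼 b, f (a, b) ^ p :=
    powerMean_rpow hp fun b ↦ hf (a, b)
  rw [powerMean, ← Finset.univ_product_univ, Finset.expect_product, powerMean]
  simp only [hinner]

lemma expect_bool (f : Bool → ℝ) : 𝔼 a, f a = (f true + f false) / 2 := by
  rw [Fintype.expect_eq_sum_div_card, Fintype.sum_bool, Fintype.card_bool, Nat.cast_ofNat]

lemma powerMean_bool (f : Bool → ℝ) :
    powerMean p f = ((f true ^ p + f false ^ p) / 2) ^ (1 / p) := by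
  rw [powerMean, expect_bool]

lemma sqrt_sq_add_mul_sq_le_powerMean_bool (hp₁ : 1 ≤ p) (hp₂ : p ≤ 2) {f : Bool → ℝ}
    (hf : 0 ≤ f) :
    √(((f true + f false) / 2) ^ 2 + (p - 1) * ((f true - f false) / 2) ^ 2) ≤
      powerMean p f := by
  set x := (f true + f false) / 2 with hx
  set y := (f true - f false) / 2 with hy
  have htrue : x + y = f true := by linarith
  have hfalse : x - y = f false := by linarith
  have hyx : |y| ≤ x := by
    have htrue_nonneg : 0 ≤ f true := hf true
    have hfalse_nonneg : 0 ≤ f false := hf false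
    exact abs_le.mpr ⟨by linarith, by linarith⟩
  have htwo : √(x ^ 2 + (p - 1) * y ^ 2) ^ p ≤ (f true ^ p + f false ^ p) / 2 := by
    have hform : 0 ≤ x ^ 2 + (p - 1) * y ^ 2 :=
      add_nonneg (sq_nonneg x) (mul_nonneg (by linarith) (sq_nonneg y))
    rw [← Real.rpow_div_two_eq_sqrt p hform, ← htrue, ← hfalse]
    exact sq_add_mul_sq_rpow_half_le hp₁ hp₂ hyx
  have hsqrt := Real.sqrt_nonneg (x ^ 2 + (p - 1) * y ^ 2)
  rwa [powerMean_bool, one_div, Real.le_rpow_inv_iff_of_pos hsqrt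
    ((Real.rpow_nonneg hsqrt p).trans htwo) (by linarith)]

end PowerMean

/-- The kernel `K` is `(p, q)`-hypercontractive: on nonnegative functions its bilinear form is
bounded by the product of the `L^p` and `L^q` norms. The rows are averaged and the columns summed,
so that `K a b` plays the role of the transition probability from `a` to `b`. -/
def IsHypercontractive {α β : Type*} [Fintype α] [Fintype β] (p q : ℝ) (K : α → β → ℝ) : Prop :=
  ∀ ⦃f : α → ℝ⦄ ⦃g : β → ℝ⦄, 0 ≤ f → 0 ≤ g →
    𝔼 a, ∑ b, K a b * (f a * g b) ≤ powerMean p f * powerMean q g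

namespace IsHypercontractive

variable {p q : ℝ}

lemma comp_equiv {α β γ δ : Type*} [Fintype α] [Fintype β] [Fintype γ] [Fintype δ]
    {K : α → β → ℝ} (hK : IsHypercontractive p q K) (e : γ ≃ α) (e' : δ ≃ β) :
    IsHypercontractive p q fun c d ↦ K (e c) (e' d) := by
  intro f g hf hg
  have hbound := hK (f := fun a ↦ f (e.symm a)) (g := fun b ↦ g (e'.symm b))
    (fun _ ↦ hf _) (fun _ ↦ hg _)
  rw [powerMean_comp_equiv, powerMean_comp_equiv] at hbound
  refine le_of_eq_of_le (Fintype.expect_equiv e _ _ fun c ↦ ?_) hbound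
  exact Fintype.sum_equiv e' _ _ fun d ↦ by simp only [Equiv.symm_apply_apply]

lemma prod {α β γ δ : Type*} [Fintype α] [Fintype β] [Fintype γ] [Fintype δ]
    {K : α → β → ℝ} {L : γ → δ → ℝ} (hp : p ≠ 0) (hq : q ≠ 0)
    (hK₀ : ∀ a b, 0 ≤ K a b) (hK : IsHypercontractive p q K) (hL : IsHypercontractive p q L) :
    IsHypercontractive p q fun (x : α × γ) (y : β × δ) ↦ K x.1 y.1 * L x.2 y.2 := by
  intro f g hf hg
  calc 𝔼 x : α × γ, ∑ y : β × δ, K x.1 y.1 * L x.2 y.2 * (f x * g y)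
      = 𝔼 a, ∑ b, K a b * 𝔼 c, ∑ d, L c d * (f (a, c) * g (b, d)) := by
        rw [← Finset.univ_product_univ, Finset.expect_product]
        simp only [Fintype.sum_prod_type, Finset.expect_sum_comm, mul_assoc, Finset.mul_expect,
          Finset.mul_sum]
    _ ≤ 𝔼 a, ∑ b, K a b *
          (powerMean p (fun c ↦ f (a, c)) * powerMean q fun d ↦ g (b, d)) := by
        refine Finset.expect_le_expect fun a _ ↦ Finset.sum_le_sum fun b _ ↦ ?_
        exact mul_le_mul_of_nonneg_left (hL (fun _ ↦ hf _) fun _ ↦ hg _) (hK₀ a b)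
    _ ≤ powerMean p (fun a ↦ powerMean p fun c ↦ f (a, c)) *
          powerMean q fun b ↦ powerMean q fun d ↦ g (b, d) :=
        hK (fun _ ↦ powerMean_nonneg fun _ ↦ hf _) (fun _ ↦ powerMean_nonneg fun _ ↦ hg _)
    _ = powerMean p f * powerMean q g := by rw [powerMean_prod hp hf, powerMean_prod hq hg]

lemma pi (hp : p ≠ 0) (hq : q ≠ 0) {n : ℕ} {α β : Fin n → Type*} [∀ i, Fintype (α i)]
    [∀ i, Fintype (β i)] {K : ∀ i, α i → β i → ℝ} (hK₀ : ∀ i a b, 0 ≤ K i a b)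
    (hK : ∀ i, IsHypercontractive p q (K i)) :
    IsHypercontractive p q fun (u : ∀ i, α i) (v : ∀ i, β i) ↦ ∏ i, K i (u i) (v i) := by
  induction n with
  | zero =>
    intro f g hf hg
    simp only [Finset.univ_unique, Finset.expect_singleton, Finset.sum_singleton,
      Finset.univ_eq_empty, Finset.prod_empty, one_mul, powerMean_of_unique hp hf,
      powerMean_of_unique hq hg, le_refl]
  | succ n ih =>
    have hcons := (prod hp hq (hK₀ 0) (hK 0)
      (ih (fun i ↦ hK₀ i.succ) fun i ↦ hK i.succ)).comp_equiv
        (Fin.consEquiv α).symm (Fin.consEquiv β).symm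
    simp only [Fin.prod_univ_succ]
    exact hcons

end IsHypercontractive

/-- The transition matrix of the binary symmetric channel with crossover probability `η`. -/
def bitNoise (η : ℝ) (a b : Bool) : ℝ := if xor a b then η else 1 - η

lemma bitNoise_nonneg {η : ℝ} (hη₀ : 0 ≤ η) (hη₁ : η ≤ 1) (a b : Bool) : 0 ≤ bitNoise η a b := by
  unfold bitNoise
  split_ifs <;> linarith

lemma isHypercontractive_bitNoise {η p q : ℝ} (hp₁ : 1 ≤ p) (hp₂ : p ≤ 2) (hq₁ : 1 ≤ q)
    (hq₂ : q ≤ 2) (hη : (1 - 2 * η) ^ 2 ≤ (p - 1) * (q - 1)) :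
    IsHypercontractive p q (bitNoise η) := by
  intro f g hf hg
  calc 𝔼 a, ∑ b, bitNoise η a b * (f a * g b)
      = (f true + f false) / 2 * ((g true + g false) / 2) +
          (1 - 2 * η) * ((f true - f false) / 2 * ((g true - g false) / 2)) := by
        simp only [expect_bool, Fintype.sum_bool, bitNoise, Bool.xor_true, Bool.xor_false,
          Bool.not_true, Bool.not_false, Bool.false_eq_true, if_true, if_false]
        ring
    _ ≤ √(((f true + f false) / 2) ^ 2 + (p - 1) * ((f true - f false) / 2) ^ 2) *
          √(((g true + g false) / 2) ^ 2 + (q - 1) * ((g true - g false) / 2) ^ 2) :=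
        mul_add_mul_mul_le_sqrt_mul_sqrt (by linarith) (by linarith) hη _ _ _ _
    _ ≤ powerMean p f * powerMean q g :=
        mul_le_mul (sqrt_sq_add_mul_sq_le_powerMean_bool hp₁ hp₂ hf)
          (sqrt_sq_add_mul_sq_le_powerMean_bool hq₁ hq₂ hg) (Real.sqrt_nonneg _)
          (powerMean_nonneg hf)

section NoiseOnCube

variable {n : ℕ}

lemma sxor_involutive (u : Fin n → Bool) : Function.Involutive (sxor u) := fun v ↦ by
  funext i
  simp only [sxor, ← Bool.xor_assoc, Bool.xor_self, Bool.false_xor]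

lemma pow_wt_mul_pow_sub_wt {M : Type*} [CommMonoid M] (a b : M) (z : Fin n → Bool) :
    a ^ wt z * b ^ (n - wt z) = ∏ i, if z i then a else b := by
  have hcompl : #{i | ¬ z i = true} = n - wt z := by
    rw [← Finset.compl_filter, Finset.card_compl, Fintype.card_fin, wt]
  rw [Finset.prod_ite, Finset.prod_const, Finset.prod_const, hcompl, wt]

lemma sum_noise_eq_sum_prod_bitNoise (η : ℝ) (u : Fin n → Bool) (g : (Fin n → Bool) → ℝ) :
    ∑ z, η ^ wt z * (1 - η) ^ (n - wt z) * g (sxor u z) =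
      ∑ v, (∏ i, bitNoise η (u i) (v i)) * g v := by
  rw [← (sxor_involutive u).bijective.sum_comp fun v ↦ (∏ i, bitNoise η (u i) (v i)) * g v]
  have hbit (z : Fin n → Bool) (i : Fin n) : xor (u i) (sxor u z i) = z i :=
    congrFun (sxor_involutive u z) i
  simp only [pow_wt_mul_pow_sub_wt, bitNoise, hbit]

lemma expect_cube (f : (Fin n → Bool) → ℝ) : 𝔼 u, f u = (∑ u, f u) / 2 ^ n := by
  simp [Fintype.expect_eq_sum_div_card]

end NoiseOnCube

theorem noise_correlation_hypercontractive_bound_general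
    (n : ℕ) {η p q : ℝ} (hp₁ : 1 ≤ p) (hp₂ : p ≤ 2) (hq₁ : 1 ≤ q) (hq₂ : q ≤ 2)
    (hη : (1 - 2 * η) ^ 2 ≤ (p - 1) * (q - 1))
    (f g : (Fin n → Bool) → ℝ) (hf : ∀ u, 0 ≤ f u) (hg : ∀ u, 0 ≤ g u) :
    (∑ u : Fin n → Bool, ∑ z : Fin n → Bool,
        η ^ (wt z) * (1 - η) ^ (n - wt z) * (f u * g (sxor u z))) / (2 : ℝ) ^ n
      ≤ ((∑ u : Fin n → Bool, f u ^ p) / (2 : ℝ) ^ n) ^ (1 / p)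
        * ((∑ u : Fin n → Bool, g u ^ q) / (2 : ℝ) ^ n) ^ (1 / q) := by
  have hη_sq : (1 - 2 * η) ^ 2 ≤ 1 :=
    hη.trans (mul_le_one₀ (by linarith) (by linarith) (by linarith))
  obtain ⟨hη_lower, hη_upper⟩ := abs_le.mp ((sq_le_one_iff_abs_le_one _).mp hη_sq)
  have hcube : IsHypercontractive p q fun u v : Fin n → Bool ↦ ∏ i, bitNoise η (u i) (v i) :=
    .pi (by linarith) (by linarith) (fun _ ↦ bitNoise_nonneg (by linarith) (by linarith))
      fun _ ↦ isHypercontractive_bitNoise hp₁ hp₂ hq₁ hq₂ hη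
  have hbound := hcube hf hg
  simp only [← sum_noise_eq_sum_prod_bitNoise η _ fun v ↦ f _ * g v, powerMean,
    expect_cube] at hbound
  exact hbound

/-- For nonnegative `f, g : {0,1}^n → ℝ`, `u` uniform and `z`
`η`-biased (each bit independently `1` with probability `η`), independent of `u`,
`E_{u,z}[f(u)·g(u⊕z)] ≤ (E_u[f^{2−2η}])^{1/(2−2η)} · (E_u[g^{2−2η}])^{1/(2−2η)}`
(a consequence of the Bonami–Beckner hypercontractive inequality). -/
theorem noise_correlation_hypercontractive_bound
    (n : ℕ) (η : ℝ) (hη0 : 0 ≤ η) (hη1 : η ≤ 1 / 2)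
    (f g : (Fin n → Bool) → ℝ) (hf : ∀ u, 0 ≤ f u) (hg : ∀ u, 0 ≤ g u) :
    (∑ u : Fin n → Bool, ∑ z : Fin n → Bool,
        η ^ (wt z) * (1 - η) ^ (n - wt z) * (f u * g (sxor u z))) / (2 : ℝ) ^ n
      ≤ ((∑ u : Fin n → Bool, f u ^ (2 - 2 * η)) / (2 : ℝ) ^ n) ^ (1 / (2 - 2 * η))
        * ((∑ u : Fin n → Bool, g u ^ (2 - 2 * η)) / (2 : ℝ) ^ n) ^ (1 / (2 - 2 * η)) := by
  exact noise_correlation_hypercontractive_bound_general n (by linarith) (by linarith)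
    (by linarith) (by linarith) (by linarith) f g hf hg
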